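/- Let G be a connected planar graph on n ≥ 5 vertices and let r ∈ V(G) be a vertex of degree exactly 3. Then sn₂(G, r) > n/3 − 1. -/

import Mathlib

/-- The set of vertices on fire after `t` fire-spread rounds, when the fire breaks out
at `v` and the firefighters protect the vertices of `P s` in round `s + 1` (protection
happens just before the `s`-th spread step and is permanent). -/
def burnedSet {V : Type*} (G : SimpleGraph V) (v : V) (P : ℕ → Set V) : ℕ → Set V
  | 0 => {v}
  | t + 1 => burnedSet G v P t ∪
      {w | (∃ u ∈ burnedSet G v P t, G.Adj u w) ∧ ∀ s ≤ t, w ∉ P s}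

/-- A strategy `P` is valid for the per-round budgets `b` if in each round it protects
at most `b t` vertices, none of which are already on fire. -/
def ValidStrategy {V : Type*} (G : SimpleGraph V) (b : ℕ → ℕ) (v : V) (P : ℕ → Set V) : Prop :=
  ∀ t, (P t).Finite ∧ (P t).ncard ≤ b t ∧ Disjoint (P t) (burnedSet G v P t)

/-- `sn G b v` is the maximum number of vertices that can be saved (i.e. that never
catch fire) when the fire breaks out at `v` and the firefighters may protect at most
`b t` vertices in round `t + 1`. -/
noncomputable def sn {V : Type*} (G : SimpleGraph V) (b : ℕ → ℕ) (v : V) : ℕ :=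
  sSup {m | ∃ P, ValidStrategy G b v P ∧
    m = Nat.card {w : V | ∀ t, w ∉ burnedSet G v P t}}

/-- The surviving rate of `G` with per-round budgets `b` : the expected fraction of
vertices that can be saved when the starting vertex is chosen uniformly at random. -/
noncomputable def survivingRate {V : Type*} [Fintype V] (G : SimpleGraph V) (b : ℕ → ℕ) : ℝ :=
  (∑ v : V, (sn G b v : ℝ)) / (Fintype.card V : ℝ) ^ 2

/-- A plane embedding of a simple graph: vertices are points of the plane and edges are
simple arcs between their endpoints, such that arcs avoid all other vertices and two
arcs of distinct edges meet only in common endpoints. -/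
structure PlaneEmbedding {V : Type*} (G : SimpleGraph V) where
  pos : V → ℝ × ℝ
  arc : V → V → ℝ → ℝ × ℝ
  pos_inj : Function.Injective pos
  arc_cont : ∀ ⦃u v⦄, G.Adj u v → Continuous (arc u v)
  arc_injOn : ∀ ⦃u v⦄, G.Adj u v → Set.InjOn (arc u v) (Set.Icc 0 1)
  arc_zero : ∀ ⦃u v⦄, G.Adj u v → arc u v 0 = pos u
  arc_one : ∀ ⦃u v⦄, G.Adj u v → arc u v 1 = pos v
  arc_symm : ∀ ⦃u v⦄, G.Adj u v → ∀ t, arc v u t = arc u v (1 - t)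
  arc_avoid : ∀ ⦃u v⦄, G.Adj u v → ∀ w : V, pos w ∉ arc u v '' Set.Ioo 0 1
  arc_meet : ∀ ⦃u v x y⦄, G.Adj u v → G.Adj x y → s(u, v) ≠ s(x, y) →
      arc u v '' Set.Icc 0 1 ∩ arc x y '' Set.Icc 0 1 ⊆
        ({pos u, pos v} : Set (ℝ × ℝ)) ∩ {pos x, pos y}

/-- A graph is planar if it admits a plane embedding. -/
def IsPlanar {V : Type*} (G : SimpleGraph V) : Prop :=
  Nonempty (PlaneEmbedding G)

/-!
Planarity enters only through the absence of a `K₃,₃` minor: a winding number argument shows that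
a drawing of `K₃,₃` in the plane has two crossing paths without a common end.

Cut `G` along a breadth-first search tree rooted at `r` into the three branches of the neighbours
of `r`. A tree path has at most one vertex at each distance from `r`, so two firefighters can
protect two tree paths, each vertex just before the fire could reach it. If `a` and `b` are
protected, by tree paths in their branches, the fire starts in the branch of the third neighbour
`c`. Protect the path to the end in the branch of `a` of the outermost edge between the branches of
`a` and `c`, seen from `b`, and likewise in the branch of `b`: then the fire does not pass between
the branches of `a` and `b`. There are three such strategies, one for each neighbour of `r`. A
vertex in the branch of `a` that burns both when the fire starts at `c` and when it starts at `b`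
gives a `K₃,₃` minor, so each vertex other than `r` is saved by one of the three strategies, and
one of them saves at least `(n - 1) / 3` vertices.
-/

open scoped unitInterval
open Complex (exp)

/-! ### Crossings of drawings of `K₃,₃` in the plane -/

lemma exists_continuousMap_exp_eq_on_square (F : C(I × I, ℂ)) (hF : ∀ x, F x ≠ 0) :
    ∃ l : C(I × I, ℂ), ∀ x, exp (l x) = F x := by
  let retract : C(ℝ × ℝ, I × I) :=
    ⟨Prod.map (Set.projIcc 0 1 zero_le_one) (Set.projIcc 0 1 zero_le_one),
      continuous_projIcc.prodMap continuous_projIcc⟩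
  obtain ⟨l, ⟨-, hl⟩, -⟩ := Complex.isCoveringMapOn_exp.existsUnique_continuousMap_lifts
    (F.comp retract) (a₀ := 0) (Complex.exp_log (hF _)) fun _ => hF _
  refine ⟨l.comp ⟨Prod.map (↑) (↑), by fun_prop⟩, fun x => (congrFun hl _).trans ?_⟩
  simp [retract, Prod.map]

lemma exists_continuousMap_exp_eq (f : C(I, ℂ)) (hf : ∀ t, f t ≠ 0) :
    ∃ l : C(I, ℂ), ∀ t, exp (l t) = f t := by
  obtain ⟨l, hl⟩ := exists_continuousMap_exp_eq_on_square (f.comp .fst) fun _ => hf _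
  exact ⟨l.comp ((ContinuousMap.id I).prodMk (.const I 0)), fun t => hl (t, 0)⟩

open Classical in
/-- The total increment along the path `f` of a continuous logarithm of `f`, that is,
`∫ df / f`; it is `0` by convention if `f` has no continuous logarithm. -/
noncomputable def logIncrement (f : C(I, ℂ)) : ℂ :=
  if h : ∃ l : C(I, ℂ), ∀ t, exp (l t) = f t then h.choose 1 - h.choose 0 else 0

lemma logIncrement_eq {f l : C(I, ℂ)} (hl : ∀ t, exp (l t) = f t) :
    logIncrement f = l 1 - l 0 := by
  have hf : ∃ l : C(I, ℂ), ∀ t, exp (l t) = f t := ⟨l, hl⟩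
  obtain ⟨n, hn⟩ := Complex.exp_eq_exp_iff_exists_int.1 ((hf.choose_spec 0).trans (hl 0).symm)
  have heq : ⇑hf.choose = l + ContinuousMap.const I (n * (2 * Real.pi * Complex.I)) := by
    refine Complex.isCoveringMap_exp.eq_of_comp_eq hf.choose.continuous (by fun_prop)
      (funext fun t => Subtype.ext ?_) 0 hn
    simpa [hl, Complex.exp_add, Complex.exp_int_mul_two_pi_mul_I] using hf.choose_spec t
  rw [logIncrement, dif_pos hf, heq]
  simp

lemma logIncrement_neg {f : C(I, ℂ)} (hf : ∀ t, f t ≠ 0) :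
    logIncrement (-f) = logIncrement f := by
  obtain ⟨l, hl⟩ := exists_continuousMap_exp_eq f hf
  rw [logIncrement_eq hl, logIncrement_eq (l := l + .const I (Real.pi * Complex.I))]
  · simp
  · simp [Complex.exp_add, hl]

lemma exists_logIncrement_eq {f : C(I, ℂ)} (hf : ∀ t, f t ≠ 0) {p q : ℂ}
    (hp : exp p = f 0) (hq : exp q = f 1) :
    ∃ m : ℤ, logIncrement f = q - p + m * (2 * Real.pi * Complex.I) := by
  obtain ⟨l, hl⟩ := exists_continuousMap_exp_eq f hf
  obtain ⟨n₀, hn₀⟩ := Complex.exp_eq_exp_iff_exists_int.1 ((hl 0).trans hp.symm)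
  obtain ⟨n₁, hn₁⟩ := Complex.exp_eq_exp_iff_exists_int.1 ((hl 1).trans hq.symm)
  refine ⟨n₁ - n₀, ?_⟩
  rw [logIncrement_eq hl, hn₀, hn₁]
  push_cast
  ring

/-- The increment of a continuous logarithm of `γ - z`: `2πi` times the (real or complex) number
of turns that the path `γ` makes around the point `z`. -/
noncomputable def turn (γ : C(I, ℂ)) (z : ℂ) : ℂ :=
  logIncrement (γ - .const I z)

/-- Both sides are the increment of `log (γ s - γ' t)` between opposite corners of the square,
along its two boundary paths. -/
lemma turn_add_turn_eq {a b a' b' : ℂ} (γ : Path a b) (γ' : Path a' b')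
    (h : ∀ s t, γ s ≠ γ' t) :
    turn γ a' + turn γ' b = turn γ' a + turn γ b' := by
  obtain ⟨l, hl⟩ := exists_continuousMap_exp_eq_on_square
    ⟨fun x => γ x.1 - γ' x.2, by fun_prop⟩ fun x => sub_ne_zero.2 (h x.1 x.2)
  have turn_left : ∀ t, turn γ (γ' t) = l (1, t) - l (0, t) := fun t =>
    logIncrement_eq (l := l.comp ((ContinuousMap.id I).prodMk (.const I t))) fun s => hl (s, t)
  have turn_right : ∀ s, turn γ' (γ s) = l (s, 1) - l (s, 0) := fun s => by
    rw [turn, ← logIncrement_neg fun t => sub_ne_zero.2 (h s t).symm]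
    refine logIncrement_eq (l := l.comp ((ContinuousMap.const I s).prodMk (.id I))) fun t => ?_
    simpa using hl (s, t)
  have h₁ := turn_left 0
  have h₂ := turn_right 1
  have h₃ := turn_right 0
  have h₄ := turn_left 1
  simp only [Path.source, Path.target] at h₁ h₂ h₃ h₄
  rw [h₁, h₂, h₃, h₄]
  ring

lemma exists_log_sub {ι : Type*} [LinearOrder ι] {c : ι → ℂ} (hc : Function.Injective c) :
    ∃ α : ι → ι → ℂ, (∀ i i', i ≠ i' → exp (α i i') = c i - c i') ∧
      ∀ i i', i < i' → α i' i = α i i' + Real.pi * Complex.I := by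
  refine ⟨fun i i' => if i < i' then Complex.log (c i - c i') else
    Complex.log (c i' - c i) + Real.pi * Complex.I, fun i i' hne => ?_, fun i i' hlt => ?_⟩
  · dsimp only
    split_ifs
    · exact Complex.exp_log (sub_ne_zero.2 (hc.ne hne))
    · rw [Complex.exp_add, Complex.exp_log (sub_ne_zero.2 (hc.ne hne.symm)), Complex.exp_pi_mul_I]
      ring
  · simp [hlt, hlt.not_gt]

/-- `m e x` counts the turns of `γ e` around `c x`, relative to a fixed choice of logarithms of
the differences `c x - c y`. -/
lemma exists_int_turns {P E : Type*} [LinearOrder P] {c : P → ℂ} (hc : Function.Injective c)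
    {p q : E → P} (γ : ∀ e, Path (c (p e)) (c (q e))) :
    ∃ m : E → P → ℤ, ∀ e e', p e < p e' → p e < q e' → p e' < q e → (∀ s t, γ e s ≠ γ e' t) →
      (q e < q e' → m e' (p e) - m e (p e') + m e (q e') - m e' (q e) = 1) ∧
      (q e' < q e → m e' (p e) - m e (p e') + m e (q e') - m e' (q e) = 0) := by
  obtain ⟨L, exp_L, L_swap⟩ := exists_log_sub hc
  have exists_turns : ∀ e x, ∃ m : ℤ, (∀ s, γ e s ≠ c x) →
      turn (γ e) (c x) = L (q e) x - L (p e) x + m * (2 * Real.pi * Complex.I) := fun e x => by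
    by_cases hx : ∀ s, γ e s ≠ c x
    · have hp : p e ≠ x := fun h => hx 0 (by simp [h])
      have hq : q e ≠ x := fun h => hx 1 (by simp [h])
      obtain ⟨m, hm⟩ := exists_logIncrement_eq (f := γ e - .const I (c x))
        (fun s => sub_ne_zero.2 (hx s)) (p := L (p e) x) (q := L (q e) x)
        (by simp [exp_L _ _ hp]) (by simp [exp_L _ _ hq])
      exact ⟨m, fun _ => hm⟩
    · exact ⟨0, fun h => absurd h hx⟩
  choose m hm using exists_turns
  refine ⟨m, fun e e' hpp hpq hqp hdisj => ?_⟩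
  have key := turn_add_turn_eq (γ e) (γ e') hdisj
  rw [hm e _ fun s => by simpa using hdisj s 0, hm e _ fun s => by simpa using hdisj s 1,
    hm e' _ fun s => by simpa using (hdisj 1 s).symm,
    hm e' _ fun s => by simpa using (hdisj 0 s).symm,
    L_swap _ _ hpp, L_swap _ _ hpq, L_swap _ _ hqp] at key
  refine ⟨fun hqq => ?_, fun hqq => ?_⟩ <;>
  · rw [L_swap _ _ hqq] at key
    refine Int.cast_injective (α := ℂ) (mul_right_cancel₀ Complex.two_pi_I_ne_zero ?_)
    push_cast
    linear_combination -key

/-- Each integer `m i j i'` and `k i j j'` occurs in exactly two of the eighteen equations, whose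
right-hand sides have an odd sum. -/
lemma false_of_turn_equations (m k : Fin 3 → Fin 3 → Fin 3 → ℤ)
    (h : ∀ i i', i < i' → ∀ j j',
      (j < j' → m i' j' i - m i j i' + k i j j' - k i' j' j = 1) ∧
      (j' < j → m i' j' i - m i j i' + k i j j' - k i' j' j = 0)) : False := by
  have rows : ∀ i i', i < i' → _ := fun i i' hi =>
    And.intro ((h i i' hi 0 1).1 (by decide)) <| And.intro ((h i i' hi 0 2).1 (by decide)) <|
    And.intro ((h i i' hi 1 2).1 (by decide)) <| And.intro ((h i i' hi 1 0).2 (by decide)) <|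
    And.intro ((h i i' hi 2 0).2 (by decide)) ((h i i' hi 2 1).2 (by decide))
  have h₀₁ := rows 0 1 (by decide)
  have h₀₂ := rows 0 2 (by decide)
  have h₁₂ := rows 1 2 (by decide)
  omega

theorem exists_path_eq_path (a b : Fin 3 → ℂ) (γ : ∀ i j, Path (a i) (b j)) :
    ∃ i i' j j', i ≠ i' ∧ j ≠ j' ∧ ∃ s t, γ i j s = γ i' j' t := by
  by_contra! hdisj
  have c_inj : Function.Injective (Sum.elim a b ∘ ofLex) := by
    refine Function.Injective.comp (Function.Injective.sumElim ?_ ?_ ?_) ofLex.injective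
    · intro i i'
      by_contra! hi
      simpa [hi.1] using hdisj i i' 0 1 hi.2 (by decide) 0 0
    · intro j j'
      by_contra! hj
      simpa [hj.1] using hdisj 0 1 j j' (by decide) hj.2 1 1
    · intro i j
      obtain ⟨i', hi⟩ := exists_ne i
      obtain ⟨j', hj⟩ := exists_ne j
      simpa using hdisj i i' j' j hi.symm hj 0 1
  obtain ⟨m, hm⟩ := exists_int_turns c_inj (E := Fin 3 × Fin 3)
    (p := fun e => toLex (.inl e.1)) (q := fun e => toLex (.inr e.2)) fun e => γ e.1 e.2
  refine false_of_turn_equations (fun i j i' => m (i, j) (toLex (.inl i')))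
    (fun i j j' => m (i, j) (toLex (.inr j'))) fun i i' hi j j' => ?_
  have disj : j ≠ j' → _ := fun hj => hm (i, j) (i', j') (Sum.Lex.inl_lt_inl_iff.2 hi)
    (Sum.Lex.inl_lt_inr _ _) (Sum.Lex.inl_lt_inr _ _) (hdisj i i' j j' hi.ne hj)
  exact ⟨fun hj => (disj hj.ne).1 (Sum.Lex.inr_lt_inr_iff.2 hj),
    fun hj => (disj hj.ne').2 (Sum.Lex.inr_lt_inr_iff.2 hj)⟩

/-! ### Planar graphs have no `K₃,₃` minor -/

/-- Some edge of `G` joins the sets `A` and `B`. -/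
def Touches {V : Type*} (G : SimpleGraph V) (A B : Set V) : Prop :=
  ∃ x ∈ A, ∃ y ∈ B, G.Adj x y

lemma Touches.symm {V : Type*} {G : SimpleGraph V} {A B : Set V} (h : Touches G A B) :
    Touches G B A :=
  let ⟨x, hx, y, hy, hxy⟩ := h
  ⟨y, hy, x, hx, hxy.symm⟩

/-- `H` is a minor of `G`, witnessed by a family of branch sets: pairwise disjoint connected sets
of vertices of `G`, one for each vertex of `H`, which are joined by an edge of `G` whenever the
corresponding vertices are adjacent in `H`. -/
def IsMinor {W V : Type*} (H : SimpleGraph W) (G : SimpleGraph V) : Prop :=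
  ∃ B : W → Set V, (∀ u, (G.induce (B u)).Connected) ∧ Pairwise (Function.onFun Disjoint B) ∧
    ∀ u v, H.Adj u v → Touches G (B u) (B v)

lemma isMinor_completeBipartiteGraph {V ι κ : Type*} {G : SimpleGraph V} {A : ι → Set V}
    {B : κ → Set V} (hA : ∀ i, (G.induce (A i)).Connected) (hB : ∀ j, (G.induce (B j)).Connected)
    (hAA : Pairwise (Function.onFun Disjoint A)) (hBB : Pairwise (Function.onFun Disjoint B))
    (hAB : ∀ i j, Disjoint (A i) (B j)) (touch : ∀ i j, Touches G (A i) (B j)) :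
    IsMinor (completeBipartiteGraph ι κ) G := by
  refine ⟨Sum.elim A B, Sum.rec hA hB, ?_, ?_⟩
  · rintro (i | i) (j | j) hne
    · exact hAA (by simpa using hne)
    · exact hAB i j
    · exact (hAB j i).symm
    · exact hBB (by simpa using hne)
  · rintro (i | i) (j | j) h
    · simp at h
    · exact touch i j
    · exact (touch j i).symm
    · simp at h

lemma isMinor_K33_of_sets {V : Type*} {G : SimpleGraph V} {A₁ A₂ A₃ B₁ B₂ B₃ : Set V}
    (conn : ∀ S ∈ [A₁, A₂, A₃, B₁, B₂, B₃], (G.induce S).Connected)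
    (disj : [A₁, A₂, A₃, B₁, B₂, B₃].Pairwise Disjoint)
    (touch : ∀ A ∈ [A₁, A₂, A₃], ∀ B ∈ [B₁, B₂, B₃], Touches G A B) :
    IsMinor (completeBipartiteGraph (Fin 3) (Fin 3)) G := by
  simp only [List.pairwise_cons, List.forall_mem_cons] at conn disj touch
  apply isMinor_completeBipartiteGraph (A := ![A₁, A₂, A₃]) (B := ![B₁, B₂, B₃]) <;>
    simp [pairwise_disjoint_on, Fin.forall_fin_succ, *]

namespace PlaneEmbedding

variable {V : Type*} {G : SimpleGraph V} (E : PlaneEmbedding G)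

/-- The part of the plane occupied by the subgraph induced on `S`. -/
def drawing (S : Set V) : Set (ℝ × ℝ) :=
  E.pos '' S ∪ {z | ∃ u ∈ S, ∃ v ∈ S, G.Adj u v ∧ z ∈ E.arc u v '' Set.Icc 0 1}

lemma eq_or_eq_of_pos_mem_arc {u v w : V} (h : G.Adj u v)
    (hw : E.pos w ∈ E.arc u v '' Set.Icc 0 1) : w = u ∨ w = v := by
  obtain ⟨t, ⟨h₀, h₁⟩, ht⟩ := hw
  rcases h₀.eq_or_lt with rfl | h₀
  · exact .inl (E.pos_inj (by rw [← ht, E.arc_zero h]))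
  rcases h₁.eq_or_lt with rfl | h₁
  · exact .inr (E.pos_inj (by rw [← ht, E.arc_one h]))
  · exact absurd ⟨t, ⟨h₀, h₁⟩, ht⟩ (E.arc_avoid h w)

lemma pos_mem_drawing_iff {S : Set V} {w : V} : E.pos w ∈ E.drawing S ↔ w ∈ S := by
  refine ⟨?_, fun h => .inl ⟨w, h, rfl⟩⟩
  rintro (⟨v, hv, h⟩ | ⟨u, hu, v, hv, huv, h⟩)
  · rwa [← E.pos_inj h]
  · rcases E.eq_or_eq_of_pos_mem_arc huv h with rfl | rfl
    exacts [hu, hv]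

lemma disjoint_drawing {S T : Set V} (h : Disjoint S T) :
    Disjoint (E.drawing S) (E.drawing T) := by
  rw [Set.disjoint_left] at h ⊢
  intro z hzS hzT
  obtain ⟨w, rfl⟩ : ∃ w, E.pos w = z := by
    rcases hzS with ⟨v, -, hv⟩ | ⟨u, hu, v, -, huv, hz⟩
    · exact ⟨v, hv⟩
    rcases hzT with ⟨v', -, hv'⟩ | ⟨u', hu', v', hv', huv', hz'⟩
    · exact ⟨v', hv'⟩
    have hne : s(u, v) ≠ s(u', v') := fun heq => by
      rcases Sym2.eq_iff.1 heq with ⟨rfl, -⟩ | ⟨rfl, -⟩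
      exacts [h hu hu', h hu hv']
    rcases (E.arc_meet huv huv' hne ⟨hz, hz'⟩).1 with hw | hw
    exacts [⟨u, hw.symm⟩, ⟨v, hw.symm⟩]
  exact h (E.pos_mem_drawing_iff.1 hzS) (E.pos_mem_drawing_iff.1 hzT)

lemma joinedIn_drawing {S : Set V} (hS : (G.induce S).Connected) {u v : V} (hu : u ∈ S)
    (hv : v ∈ S) : JoinedIn (E.drawing S) (E.pos u) (E.pos v) := by
  obtain ⟨p⟩ := hS ⟨u, hu⟩ ⟨v, hv⟩
  suffices ∀ x y : S, (G.induce S).Walk x y → JoinedIn (E.drawing S) (E.pos x) (E.pos y) from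
    this _ _ p
  intro x y p
  induction p with
  | nil => exact .refl (E.pos_mem_drawing_iff.2 (Subtype.prop _))
  | @cons x y _ hxy _ ih =>
    refine (JoinedIn.ofLine (E.arc_cont hxy).continuousOn (E.arc_zero hxy) (E.arc_one hxy) ?_).trans
      ih
    exact fun z hz => .inr ⟨x, x.2, y, y.2, hxy, hz⟩

end PlaneEmbedding

theorem IsPlanar.not_isMinor_K33 {V : Type*} {G : SimpleGraph V} (h : IsPlanar G) :
    ¬ IsMinor (completeBipartiteGraph (Fin 3) (Fin 3)) G := by
  obtain ⟨E⟩ := h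
  rintro ⟨B, conn, disj, adj⟩
  choose c hc using fun u => Set.nonempty_coe_sort.1 (conn u).nonempty
  have joined : ∀ i j, JoinedIn (E.drawing (B (.inl i) ∪ B (.inr j))) (E.pos (c (.inl i)))
      (E.pos (c (.inr j))) := fun i j => by
    obtain ⟨x, hx, y, hy, hxy⟩ := adj (.inl i) (.inr j) (by simp)
    exact E.joinedIn_drawing
      (SimpleGraph.connected_induce_union (conn _).preconnected (conn _).preconnected hx hy hxy)
      (.inl (hc _)) (.inr (hc _))
  let toComplex := Complex.equivRealProdCLM.symm
  obtain ⟨i, i', j, j', hi, hj, s, t, hst⟩ :=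
    exists_path_eq_path (fun i => toComplex (E.pos (c (.inl i))))
      (fun j => toComplex (E.pos (c (.inr j))))
      fun i j => (joined i j).somePath.map toComplex.continuous
  have heq : (joined i j).somePath s = (joined i' j').somePath t :=
    toComplex.injective (by simpa using hst)
  have hdisj : Disjoint (B (.inl i) ∪ B (.inr j)) (B (.inl i') ∪ B (.inr j')) := by
    rw [Set.disjoint_union_left, Set.disjoint_union_right, Set.disjoint_union_right]
    exact ⟨⟨disj (by simpa), disj (by simp)⟩, disj (by simp), disj (by simpa)⟩
  exact (E.disjoint_drawing hdisj).ne_of_mem ((joined i j).somePath_mem s)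
    ((joined i' j').somePath_mem t) heq

/-! ### Reachability inside a set of vertices -/

section ReachIn

variable {V : Type*} {G : SimpleGraph V} {S S' U : Set V} {u v w : V}

/-- The vertices that can be reached from `v` by a walk all of whose vertices, including `v`
itself, lie in `S`: the component of `v` in `G.induce S`, and the empty set if `v ∉ S`. -/
def reachIn (G : SimpleGraph V) (S : Set V) (v : V) : Set V :=
  {w | ∃ p : G.Walk v w, ∀ u ∈ p.support, u ∈ S}

lemma reachIn_subset : reachIn G S v ⊆ S :=
  fun _ ⟨p, hp⟩ => hp _ p.end_mem_support

lemma mem_reachIn_self (hv : v ∈ S) : v ∈ reachIn G S v :=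
  ⟨.nil, by simpa⟩

lemma mem_of_mem_reachIn (hw : w ∈ reachIn G S v) : v ∈ S :=
  let ⟨p, hp⟩ := hw
  hp _ p.start_mem_support

lemma mem_reachIn_comm : w ∈ reachIn G S v ↔ v ∈ reachIn G S w := by
  suffices ∀ v w, w ∈ reachIn G S v → v ∈ reachIn G S w from ⟨this v w, this w v⟩
  exact fun v w ⟨p, hp⟩ => ⟨p.reverse, by simpa using hp⟩

lemma mem_reachIn_of_adj (hu : u ∈ reachIn G S v) (hw : w ∈ S) (huw : G.Adj u w) :
    w ∈ reachIn G S v := by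
  obtain ⟨p, hp⟩ := hu
  refine ⟨p.concat huw, fun x hx => ?_⟩
  rw [SimpleGraph.Walk.support_concat, List.mem_append, List.mem_singleton] at hx
  rcases hx with hx | rfl
  exacts [hp x hx, hw]

lemma reachIn_mono (h : S ⊆ S') : reachIn G S v ⊆ reachIn G S' v :=
  fun _ ⟨p, hp⟩ => ⟨p, fun u hu => h (hp u hu)⟩

lemma reachIn_subset_of_closed (hv : v ∈ U)
    (hU : ∀ u ∈ U, u ∈ S → ∀ w ∈ S, G.Adj u w → w ∈ U) : reachIn G S v ⊆ U := by
  rintro w ⟨p, hp⟩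
  induction p with
  | nil => exact hv
  | cons huw p ih =>
    simp only [SimpleGraph.Walk.support_cons, List.forall_mem_cons] at hp
    exact ih (hU _ hv hp.1 _ (hp.2 _ p.start_mem_support) huw) hp.2

lemma reachIn_subset_reachIn (h : reachIn G S v ⊆ S') : reachIn G S v ⊆ reachIn G S' v := by
  intro w hw
  have hv := mem_reachIn_self (G := G) (mem_of_mem_reachIn hw)
  refine (reachIn_subset_of_closed (U := reachIn G S v ∩ reachIn G S' v)
    ⟨hv, mem_reachIn_self (h hv)⟩ (fun x hx _ y hy hxy => ?_) hw).2
  have hy' := mem_reachIn_of_adj hx.1 hy hxy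
  exact ⟨hy', mem_reachIn_of_adj hx.2 (h hy') hxy⟩

lemma exists_adj_of_not_reachIn_subset (hv : v ∈ S') (h : ¬ reachIn G S v ⊆ S') :
    ∃ x ∈ reachIn G (S ∩ S') v, ∃ y ∈ S \ S', G.Adj x y := by
  contrapose! h
  intro w hw
  have hvS : v ∈ S := mem_of_mem_reachIn hw
  suffices reachIn G S v ⊆ reachIn G (S ∩ S') v from (reachIn_subset (this hw)).2
  refine reachIn_subset_of_closed (mem_reachIn_self ⟨hvS, hv⟩) fun x hx _ y hy hxy => ?_
  by_contra hy'
  exact h x hx y ⟨hy, fun hyS' => hy' (mem_reachIn_of_adj hx ⟨hy, hyS'⟩ hxy)⟩ hxy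

lemma connected_induce_reachIn (hv : v ∈ S) : (G.induce (reachIn G S v)).Connected := by
  classical
  refine SimpleGraph.induce_connected_of_patches v (mem_reachIn_self hv) fun {w} ⟨p, hp⟩ =>
    ⟨{u | u ∈ p.support}, fun u hu => ⟨p.takeUntil u hu, fun x hx => hp x ?_⟩,
      p.start_mem_support, p.end_mem_support, p.connected_induce_support _ _⟩
  exact p.support_takeUntil_subset_support hu hx

lemma connected_induce_of_subset_reachIn (hv : v ∈ S) (h : S ⊆ reachIn G S v) :
    (G.induce S).Connected :=
  h.antisymm reachIn_subset ▸ connected_induce_reachIn hv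

end ReachIn

/-! ### Strategies that protect each vertex of a set just in time -/

section Firefighting

variable {V : Type*} {G : SimpleGraph V} {r : V}

lemma exists_walk_of_mem_burnedSet {P : ℕ → Set V} {t : ℕ} {w : V}
    (hw : w ∈ burnedSet G r P t) : ∃ p : G.Walk r w, p.length ≤ t := by
  induction t generalizing w with
  | zero => obtain rfl : w = r := hw; exact ⟨.nil, le_rfl⟩
  | succ t ih =>
    rcases hw with hw | ⟨⟨u, hu, huw⟩, -⟩
    · obtain ⟨p, hp⟩ := ih hw
      exact ⟨p, hp.trans t.le_succ⟩
    · obtain ⟨p, hp⟩ := ih hu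
      exact ⟨p.concat huw, by simpa using hp⟩

lemma ValidStrategy.ncard_le_sn [Finite V] {b : ℕ → ℕ} {P : ℕ → Set V}
    (hP : ValidStrategy G b r P) : {w | ∀ t, w ∉ burnedSet G r P t}.ncard ≤ sn G b r := by
  refine le_csSup ⟨Nat.card V, ?_⟩ ⟨P, hP, (Nat.card_coe_set_eq _).symm⟩
  rintro m ⟨Q, -, rfl⟩
  exact Nat.card_le_card_of_injective _ Subtype.val_injective

lemma ncard_compl_reachIn_le_sn [Finite V] {b : ℕ → ℕ} {S : Set V}
    (hS : ∀ t, (S ∩ {w | G.dist r w = t + 1}).ncard ≤ b t) :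
    (reachIn G (insert r Sᶜ) r)ᶜ.ncard ≤ sn G b r := by
  let P : ℕ → Set V := fun t => S ∩ {w | G.dist r w = t + 1}
  have valid : ValidStrategy G b r P := fun t =>
    ⟨Set.toFinite _, hS t, Set.disjoint_left.2 fun w hw hw' => by
      obtain ⟨p, hp⟩ := exists_walk_of_mem_burnedSet hw'
      exact absurd ((SimpleGraph.dist_le p).trans hp) (by simp [hw.2.out])⟩
  have burned_subset : ∀ t, burnedSet G r P t ⊆ reachIn G (insert r Sᶜ) r := fun t => by
    induction t with
    | zero => exact Set.singleton_subset_iff.2 (mem_reachIn_self (Set.mem_insert _ _))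
    | succ t ih =>
      refine Set.union_subset ih fun w ⟨⟨u, hu, huw⟩, unprotected⟩ => ?_
      refine mem_reachIn_of_adj (ih hu) (or_iff_not_imp_left.2 fun hwr hwS => ?_) huw
      obtain ⟨p, hp⟩ := exists_walk_of_mem_burnedSet hu
      have dist_le : G.dist r w ≤ t + 1 :=
        (SimpleGraph.dist_le (p.concat huw)).trans (by simpa using hp)
      have dist_pos : 0 < G.dist r w :=
        (p.concat huw).reachable.pos_dist_of_ne (Ne.symm hwr)
      exact unprotected (G.dist r w - 1) (by omega) ⟨hwS, (Nat.sub_add_cancel dist_pos).symm⟩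
  have compl_subset : (reachIn G (insert r Sᶜ) r)ᶜ ⊆ {w | ∀ t, w ∉ burnedSet G r P t} :=
    fun w hw t hwt => hw (burned_subset t hwt)
  exact (Set.ncard_le_ncard compl_subset).trans valid.ncard_le_sn

end Firefighting

/-! ### Breadth-first search trees -/

/-- A breadth-first search tree of `G` rooted at `r`, given by the parent of each vertex other
than `r`. The value `parent r` is irrelevant. -/
structure BFSTree {V : Type*} (G : SimpleGraph V) (r : V) where
  parent : V → V
  adj_parent : ∀ v, v ≠ r → G.Adj v (parent v)
  dist_parent : ∀ v, v ≠ r → G.dist r (parent v) + 1 = G.dist r v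

namespace BFSTree

variable {V : Type*} {G : SimpleGraph V} {r : V}

lemma nonempty_of_connected (hconn : G.Connected) : Nonempty (BFSTree G r) := by
  have exists_parent : ∀ v, ∃ w, v ≠ r → G.Adj v w ∧ G.dist r w + 1 = G.dist r v := fun v => by
    by_cases hv : v = r
    · exact ⟨v, fun h => absurd hv h⟩
    obtain ⟨p, hp⟩ := hconn.exists_walk_length_eq_dist v r
    cases p with
    | nil => exact absurd rfl hv
    | @cons _ w _ hvw p =>
      refine ⟨w, fun _ => ⟨hvw, ?_⟩⟩
      rw [SimpleGraph.Walk.length_cons] at hp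
      have dist_le := SimpleGraph.dist_le p
      have triangle := hconn.dist_triangle (u := v) (v := w) (w := r)
      rw [SimpleGraph.dist_eq_one_iff_adj.2 hvw] at triangle
      rw [SimpleGraph.dist_comm (u := r), SimpleGraph.dist_comm (u := r)]
      omega
  choose parent hparent using exists_parent
  exact ⟨⟨parent, fun v hv => (hparent v hv).1, fun v hv => (hparent v hv).2⟩⟩

variable (T : BFSTree G r)

/-- The vertices of the tree path from `x` to the root, both ends included. -/
def path (x : V) : Set V :=
  {w | Relation.ReflTransGen (fun u v => u ≠ r ∧ T.parent u = v) x w}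

/-- The descendants of `a`, including `a` itself. -/
def branch (a : V) : Set V :=
  {x | a ∈ T.path x}

/-- The vertices between `a` and the point where the tree paths of `x` and `y` meet. -/
def stem (a x y : V) : Set V :=
  T.branch a ∩ (T.path x ∩ T.path y)

variable {T} {S : Set V} {a b u w x y : V}

lemma induction {p : V → Prop} (T : BFSTree G r) (root : p r)
    (step : ∀ v, v ≠ r → p (T.parent v) → p v) (v : V) : p v := by
  induction hn : G.dist r v generalizing v with
  | zero =>
    by_cases hv : v = r
    · exact hv ▸ root
    · exact absurd (T.dist_parent v hv) (by omega)
  | succ n ih =>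
    by_cases hv : v = r
    · exact hv ▸ root
    · exact step v hv (ih _ (by have := T.dist_parent v hv; omega))

lemma mem_path_self : x ∈ T.path x := .refl

lemma mem_branch_self : a ∈ T.branch a := mem_path_self

lemma path_subset_path (hw : w ∈ T.path x) : T.path w ⊆ T.path x := fun _ => hw.trans

lemma parent_mem_path (hx : x ≠ r) : T.parent x ∈ T.path x := .single ⟨hx, rfl⟩

lemma root_mem_path : r ∈ T.path x :=
  T.induction (p := fun x => r ∈ T.path x) mem_path_self
    (fun _ hv ih => path_subset_path (parent_mem_path hv) ih) x

lemma mem_path_or_mem_path (hu : u ∈ T.path x) (hw : w ∈ T.path x) :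
    w ∈ T.path u ∨ u ∈ T.path w :=
  Relation.ReflTransGen.total_of_right_unique (fun _ _ _ h h' => h.2.symm.trans h'.2) hu hw

lemma eq_or_dist_lt_of_mem_path (hw : w ∈ T.path x) : w = x ∨ G.dist r w < G.dist r x := by
  induction hw with
  | refl => exact .inl rfl
  | @tail u w _ huw ih =>
    have := T.dist_parent u huw.1
    rw [huw.2] at this
    rcases ih with rfl | ih <;> omega

lemma injOn_dist_path : Set.InjOn (G.dist r) (T.path x) := by
  intro u hu w hw h
  rcases mem_path_or_mem_path hu hw with h' | h' <;>
    rcases eq_or_dist_lt_of_mem_path h' with h'' | h'' <;> first | omega | simp [h'']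

lemma exists_adj_root_mem_branch (T : BFSTree G r) : x ≠ r → ∃ a, G.Adj r a ∧ x ∈ T.branch a :=
  T.induction (p := fun x => x ≠ r → ∃ a, G.Adj r a ∧ x ∈ T.branch a) (absurd rfl)
    (fun v hv ih _ => by
      by_cases hp : T.parent v = r
      · exact ⟨v, hp ▸ (T.adj_parent v hv).symm, mem_branch_self⟩
      · obtain ⟨a, ha, hva⟩ := ih hp
        exact ⟨a, ha, path_subset_path (parent_mem_path hv) hva⟩) x

lemma root_notMem_branch (ha : G.Adj r a) : r ∉ T.branch a := fun h => by
  rcases eq_or_dist_lt_of_mem_path h with rfl | h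
  · exact ha.ne rfl
  · simp at h

lemma disjoint_branch (ha : G.Adj r a) (hb : G.Adj r b) (hab : a ≠ b) :
    Disjoint (T.branch a) (T.branch b) :=
  Set.disjoint_left.2 fun _ hxa hxb => hab <| injOn_dist_path hxa hxb <| by
    rw [SimpleGraph.dist_eq_one_iff_adj.2 ha, SimpleGraph.dist_eq_one_iff_adj.2 hb]

lemma mem_branch_of_mem_path (ha : G.Adj r a) (hx : x ∈ T.branch a) (hw : w ∈ T.path x)
    (hwr : w ≠ r) : w ∈ T.branch a := by
  obtain ⟨b, hb, hwb⟩ := T.exists_adj_root_mem_branch hwr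
  obtain rfl | hab := eq_or_ne a b
  · exact hwb
  · exact absurd (path_subset_path hw hwb) (Set.disjoint_left.1 (disjoint_branch ha hb hab) hx)

lemma mem_reachIn_of_mem_path (hw : w ∈ T.path x) (hS : ∀ u ∈ T.path x, w ∈ T.path u → u ∈ S) :
    w ∈ reachIn G S x := by
  induction hw with
  | refl => exact mem_reachIn_self (hS x mem_path_self mem_path_self)
  | @tail u w hu huw ih =>
    have hwu : w ∈ T.path u := .single huw
    refine mem_reachIn_of_adj (ih fun v hv huv => hS v hv (path_subset_path huv hwu))
      (hS w (path_subset_path hu hwu) mem_path_self) (huw.2 ▸ T.adj_parent u huw.1)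

lemma branch_subset_reachIn (hS : T.branch a ⊆ S) : T.branch a ⊆ reachIn G S a :=
  fun _ hx => mem_reachIn_comm.1 (mem_reachIn_of_mem_path hx fun _ _ hu => hS hu)

lemma stem_comm : T.stem a x y = T.stem a y x := by
  rw [stem, Set.inter_comm (T.path x), stem]

lemma connected_induce_stem (hx : x ∈ T.branch a) (hy : y ∈ T.branch a) :
    (G.induce (T.stem a x y)).Connected := by
  refine connected_induce_of_subset_reachIn ⟨mem_branch_self, hx, hy⟩ fun w hw => ?_
  exact mem_reachIn_comm.1 (mem_reachIn_of_mem_path hw.1 fun u hu hau =>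
    ⟨hau, path_subset_path hw.2.1 hu, path_subset_path hw.2.2 hu⟩)

lemma notMem_path_of_mem_diff (hw : w ∈ T.path x \ T.path y) : x ∉ T.path y :=
  fun hx => hw.2 (path_subset_path hx hw.1)

lemma connected_induce_path_diff (hx : x ∉ T.path y) :
    (G.induce (T.path x \ T.path y)).Connected := by
  refine connected_induce_of_subset_reachIn ⟨mem_path_self, hx⟩ fun w hw => ?_
  exact mem_reachIn_of_mem_path hw.1 fun u hu hwu => ⟨hu, fun hy => hw.2 (path_subset_path hy hwu)⟩

lemma touches_path_diff_stem (hx : x ∈ T.branch a) (hy : y ∈ T.branch a) (hxy : x ∉ T.path y) :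
    Touches G (T.path x \ T.path y) (T.stem a x y) := by
  have ha : a ∈ reachIn G (T.branch a ∩ T.path x) x :=
    mem_reachIn_of_mem_path hx fun u hu hau => ⟨hau, hu⟩
  obtain ⟨u, hu, w, hw, huw⟩ :=
    exists_adj_of_not_reachIn_subset (S' := (T.path y)ᶜ) hxy fun h => h ha hy
  have hu := reachIn_subset hu
  exact ⟨u, ⟨hu.1.2, hu.2⟩, w, ⟨hw.1.1, hw.1.2, not_not.1 hw.2⟩, huw⟩

end BFSTree

/-! ### Edges between two branches, seen from the third one -/

/-- `a`, `b`, `c` are three different neighbours of `r`. -/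
structure DistinctNeighbors {V : Type*} (G : SimpleGraph V) (r a b c : V) : Prop where
  adj₁ : G.Adj r a
  adj₂ : G.Adj r b
  adj₃ : G.Adj r c
  ne₁₂ : a ≠ b
  ne₁₃ : a ≠ c
  ne₂₃ : b ≠ c

namespace DistinctNeighbors

variable {V : Type*} {G : SimpleGraph V} {r a b c : V}

lemma swap (h : DistinctNeighbors G r a b c) : DistinctNeighbors G r b a c :=
  ⟨h.adj₂, h.adj₁, h.adj₃, h.ne₁₂.symm, h.ne₂₃, h.ne₁₃⟩

lemma rotate (h : DistinctNeighbors G r a b c) : DistinctNeighbors G r c a b :=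
  ⟨h.adj₃, h.adj₁, h.adj₂, h.ne₁₃.symm, h.ne₂₃.symm, h.ne₁₂⟩

end DistinctNeighbors

namespace BFSTree

variable {V : Type*} {G : SimpleGraph V} {r : V} (T : BFSTree G r)

/-- The component of `c` in the graph without the tree paths of `x` and `y`. If `x` and `y` are
the ends of an edge between two branches other than that of `c`, this is the side of `c` of the
cycle formed by this edge and the two paths. -/
def side (x y c : V) : Set V :=
  reachIn G (T.path x ∪ T.path y)ᶜ c

/-- The part of the tree paths of `x` and `y` that lies on neither of those of `u` and `w`, where
`x` and `u` belong to one branch, and `y` and `w` to another one. -/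
def seg (x y u w : V) : Set V :=
  T.path x \ T.path u ∪ T.path y \ T.path w

/-- `xy` is an edge of `G` from the branch of `a` to the branch of `b`. -/
structure IsCrossEdge (a b x y : V) : Prop where
  left_mem : x ∈ T.branch a
  right_mem : y ∈ T.branch b
  adj : G.Adj x y

/-- `xy` is the edge between the branches of `a` and `b` that comes first when seen from `c`: no
edge between these branches has an end on the side of `c` of the edge `xy`. If there are no edges
between the branches, `x` and `y` are arbitrary elements of the branches. -/
structure IsOutermost (a b c x y : V) : Prop where
  left_mem : x ∈ T.branch a
  right_mem : y ∈ T.branch b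
  adj_of_isCrossEdge : ∀ ⦃u w⦄, T.IsCrossEdge a b u w → G.Adj x y
  left_notMem_side : ∀ ⦃u w⦄, T.IsCrossEdge a b u w → u ∉ T.side x y c
  right_notMem_side : ∀ ⦃u w⦄, T.IsCrossEdge a b u w → w ∉ T.side x y c

variable {T} {a b c u w x y : V}

lemma eq_root_of_mem_path_of_mem_path (ha : G.Adj r a) (hb : G.Adj r b) (hab : a ≠ b)
    (hx : x ∈ T.branch a) (hy : y ∈ T.branch b) (hwx : w ∈ T.path x) (hwy : w ∈ T.path y) :
    w = r :=
  of_not_not fun hw => Set.disjoint_left.1 (disjoint_branch ha hb hab)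
    (mem_branch_of_mem_path ha hx hwx hw) (mem_branch_of_mem_path hb hy hwy hw)

lemma disjoint_branch_path (ha : G.Adj r a) (hb : G.Adj r b) (hab : a ≠ b)
    (hx : x ∈ T.branch b) : Disjoint (T.branch a) (T.path x) :=
  Set.disjoint_left.2 fun _ hw hwx => root_notMem_branch ha
    (eq_root_of_mem_path_of_mem_path ha hb hab hw hx mem_path_self hwx ▸ hw)

lemma side_comm : T.side x y c = T.side y x c := by
  rw [side, Set.union_comm, side]

lemma seg_comm : T.seg x y u w = T.seg y x w u :=
  Set.union_comm _ _

lemma IsCrossEdge.symm (h : T.IsCrossEdge a b x y) : T.IsCrossEdge b a y x :=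
  ⟨h.right_mem, h.left_mem, h.adj.symm⟩

lemma IsOutermost.symm (h : T.IsOutermost a b c x y) : T.IsOutermost b a c y x where
  left_mem := h.right_mem
  right_mem := h.left_mem
  adj_of_isCrossEdge _ _ e := (h.adj_of_isCrossEdge e.symm).symm
  left_notMem_side _ _ e := side_comm ▸ h.right_notMem_side e.symm
  right_notMem_side _ _ e := side_comm ▸ h.left_notMem_side e.symm

lemma branch_subset_compl (h : DistinctNeighbors G r a b c)
    (hx : x ∈ T.branch a) (hy : y ∈ T.branch b) : T.branch c ⊆ (T.path x ∪ T.path y)ᶜ :=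
  Set.subset_compl_iff_disjoint_right.2 (Set.disjoint_union_right.2
    ⟨disjoint_branch_path h.adj₃ h.adj₁ h.ne₁₃.symm hx,
      disjoint_branch_path h.adj₃ h.adj₂ h.ne₂₃.symm hy⟩)

lemma eq_empty_or_notMem_path (x y : V) : T.path x \ T.path y = ∅ ∨ x ∉ T.path y :=
  (Set.eq_empty_or_nonempty _).imp_right fun ⟨_, hw⟩ => notMem_path_of_mem_diff hw

lemma connected_induce_seg (hxy : G.Adj x y) (hne : (T.seg x y u w).Nonempty) :
    (G.induce (T.seg x y u w)).Connected := by
  rw [seg] at hne ⊢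
  rcases T.eq_empty_or_notMem_path x u with hx | hx <;>
    rcases T.eq_empty_or_notMem_path y w with hy | hy
  · simp [hx, hy] at hne
  · rw [hx, Set.empty_union]
    exact connected_induce_path_diff hy
  · rw [hy, Set.union_empty]
    exact connected_induce_path_diff hx
  · exact SimpleGraph.connected_induce_union (connected_induce_path_diff hx).preconnected
      (connected_induce_path_diff hy).preconnected ⟨mem_path_self, hx⟩ ⟨mem_path_self, hy⟩ hxy

lemma touches_seg_stem (hx : x ∈ T.branch a) (hu : u ∈ T.branch a) (hxy : G.Adj x y)
    (hne : (T.seg x y u w).Nonempty) : Touches G (T.seg x y u w) (T.stem a x u) := by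
  by_cases hxu : x ∈ T.path u
  · have hyw : y ∉ T.path w := by
      obtain ⟨s, hs | hs⟩ := hne
      · exact absurd hxu (notMem_path_of_mem_diff hs)
      · exact notMem_path_of_mem_diff hs
    exact ⟨y, .inr ⟨mem_path_self, hyw⟩, x, ⟨hx, mem_path_self, hxu⟩, hxy.symm⟩
  · obtain ⟨s, hs, h⟩ := touches_path_diff_stem hx hu hxu
    exact ⟨s, .inl hs, h⟩

lemma touches_seg_of_not_side_subset (hc : c ∈ (T.path u ∪ T.path w)ᶜ)
    (h : ¬ T.side x y c ⊆ (T.path u ∪ T.path w)ᶜ) :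
    Touches G (T.seg u w x y)
      (reachIn G ((T.path x ∪ T.path y)ᶜ ∩ (T.path u ∪ T.path w)ᶜ) c) := by
  obtain ⟨d, hd, s, ⟨hs, hs'⟩, hds⟩ := exists_adj_of_not_reachIn_subset hc h
  rw [Set.mem_compl_iff, Set.mem_union, not_or] at hs
  exact ⟨s, (not_not.1 hs').imp (⟨·, hs.1⟩) (⟨·, hs.2⟩), d, hd, hds.symm⟩

lemma isMinor_K33_of_touches_seg {C : Set V} (h : DistinctNeighbors G r a b c)
    (hxy : T.IsCrossEdge a b x y) (huw : T.IsCrossEdge a b u w) (hc : c ∈ C)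
    (conn : (G.induce C).Connected)
    (hC : C ⊆ (T.path x ∪ T.path y)ᶜ ∩ (T.path u ∪ T.path w)ᶜ)
    (touches : Touches G (T.seg x y u w) C) (touches' : Touches G (T.seg u w x y) C) :
    IsMinor (completeBipartiteGraph (Fin 3) (Fin 3)) G := by
  obtain ⟨hx, hy, hxy⟩ := hxy
  obtain ⟨hu, hw, huw⟩ := huw
  have ne : (T.seg x y u w).Nonempty := touches.imp fun _ => And.left
  have ne' : (T.seg u w x y).Nonempty := touches'.imp fun _ => And.left
  refine isMinor_K33_of_sets (A₁ := {r}) (A₂ := T.seg x y u w) (A₃ := T.seg u w x y)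
    (B₁ := T.stem a x u) (B₂ := T.stem b y w) (B₃ := C) ?_ ?_ ?_
  · simp [connected_induce_seg, connected_induce_stem, *]
  · have root_mem : ∀ z, r ∈ T.path z := fun _ => root_mem_path
    have root_notMem_a := T.root_notMem_branch h.adj₁
    have root_notMem_b := T.root_notMem_branch h.adj₂
    have eq_root : ∀ v, (v ∈ T.path x ∨ v ∈ T.path u) → (v ∈ T.path y ∨ v ∈ T.path w) →
        v = r := by
      rintro v (hv | hv) (hv' | hv')
      all_goals exact eq_root_of_mem_path_of_mem_path h.adj₁ h.adj₂ h.ne₁₂ ‹_› ‹_› hv hv'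
    clear * - root_mem root_notMem_a root_notMem_b hC eq_root
    simp only [List.pairwise_cons, List.forall_mem_cons, List.not_mem_nil, IsEmpty.forall_iff,
      implies_true, List.Pairwise.nil, and_true, Set.disjoint_left]
    refine ⟨⟨?_, ?_, ?_, ?_, ?_⟩, ⟨?_, ?_, ?_, ?_⟩, ⟨?_, ?_, ?_⟩, ⟨?_, ?_⟩, ?_⟩ <;> intro v
    all_goals
      specialize eq_root v
      specialize @hC v
      simp only [seg, stem, Set.mem_union, Set.mem_sdiff, Set.mem_inter_iff, Set.mem_compl_iff,
        Set.mem_singleton_iff] at *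
      grind
  · simp only [List.forall_mem_cons, List.not_mem_nil, IsEmpty.forall_iff, implies_true, and_true]
    exact ⟨⟨⟨r, rfl, a, ⟨mem_branch_self, hx, hu⟩, h.adj₁⟩,
        ⟨r, rfl, b, ⟨mem_branch_self, hy, hw⟩, h.adj₂⟩, r, rfl, c, hc, h.adj₃⟩,
      ⟨touches_seg_stem hx hu hxy ne,
        seg_comm ▸ touches_seg_stem hy hw hxy.symm (seg_comm ▸ ne), touches⟩,
      stem_comm ▸ touches_seg_stem hu hx huw ne',
      stem_comm ▸ seg_comm ▸ touches_seg_stem hw hy huw.symm (seg_comm ▸ ne'), touches'⟩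

lemma side_subset_compl_or (hminor : ¬ IsMinor (completeBipartiteGraph (Fin 3) (Fin 3)) G)
    (h : DistinctNeighbors G r a b c) (hxy : T.IsCrossEdge a b x y)
    (huw : T.IsCrossEdge a b u w) :
    T.side x y c ⊆ (T.path u ∪ T.path w)ᶜ ∨ T.side u w c ⊆ (T.path x ∪ T.path y)ᶜ := by
  by_contra! not_subset
  have hc := branch_subset_compl h hxy.left_mem hxy.right_mem mem_branch_self
  have hc' := branch_subset_compl h huw.left_mem huw.right_mem mem_branch_self
  have hcc' := Set.mem_inter hc hc'
  exact hminor (isMinor_K33_of_touches_seg h hxy huw (mem_reachIn_self hcc')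
    (connected_induce_reachIn hcc') reachIn_subset
    (Set.inter_comm _ _ ▸ touches_seg_of_not_side_subset hc not_subset.2)
    (touches_seg_of_not_side_subset hc' not_subset.1))

lemma exists_isOutermost [Finite V] (hminor : ¬ IsMinor (completeBipartiteGraph (Fin 3) (Fin 3)) G)
    (h : DistinctNeighbors G r a b c) : ∃ x y, T.IsOutermost a b c x y := by
  by_cases hne : ∃ e : V × V, T.IsCrossEdge a b e.1 e.2
  swap
  · have none : ∀ u w, ¬ T.IsCrossEdge a b u w := fun u w huw => hne ⟨(u, w), huw⟩
    exact ⟨a, b, mem_branch_self, mem_branch_self, fun _ _ e => absurd e (none _ _),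
      fun _ _ e => absurd e (none _ _), fun _ _ e => absurd e (none _ _)⟩
  obtain ⟨⟨x, y⟩, hxy, minimal⟩ := Set.exists_min_image {e : V × V | T.IsCrossEdge a b e.1 e.2}
    (fun e => (T.side e.1 e.2 c).ncard) (Set.toFinite _) hne
  suffices not_mem : ∀ u w, T.IsCrossEdge a b u w → u ∉ T.side x y c ∧ w ∉ T.side x y c from
    ⟨x, y, hxy.left_mem, hxy.right_mem, fun _ _ _ => hxy.adj, fun u w e => (not_mem u w e).1,
      fun u w e => (not_mem u w e).2⟩
  intro u w huw
  by_contra! mem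
  have hu : u ∈ T.path u ∪ T.path w := .inl mem_path_self
  have hw : w ∈ T.path u ∪ T.path w := .inr mem_path_self
  obtain ⟨z, hz, hz'⟩ : ∃ z ∈ T.side x y c, z ∈ T.path u ∪ T.path w :=
    (em (u ∈ T.side x y c)).elim (⟨u, ·, hu⟩) fun hu' => ⟨w, mem hu', hw⟩
  have subset : T.side u w c ⊆ T.side x y c := reachIn_subset_reachIn <|
    (side_subset_compl_or hminor h hxy huw).resolve_left fun h => h hz hz'
  exact (minimal (u, w) huw).not_gt (Set.ncard_lt_ncard
    (Set.ssubset_iff_of_subset subset |>.2 ⟨z, hz, fun h => reachIn_subset h hz'⟩))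

end BFSTree

/-! ### The three fires -/

namespace BFSTree

variable {V : Type*} {G : SimpleGraph V} {r : V} (T : BFSTree G r)

/-- The vertices that a fire at `c` reaches in the branches of `a` and `c` when `S` is protected. -/
def spread (a c : V) (S : Set V) : Set V :=
  reachIn G ((T.branch a ∪ T.branch c) \ S) c

/-- The vertices that burn when the vertices other than `r` on the tree paths of `x` and `y` are
protected. -/
def burn (x y : V) : Set V :=
  reachIn G (insert r (T.path x ∪ T.path y)ᶜ) r

variable {T} {S : Set V} {a b c p q u w x x' y y' z : V}

lemma burn_comm : T.burn x y = T.burn y x := by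
  rw [burn, Set.union_comm, burn]

lemma ncard_compl_burn_le_sn [Finite V] : (T.burn x y)ᶜ.ncard ≤ sn G (fun _ => 2) r := by
  refine ncard_compl_reachIn_le_sn fun t => ?_
  have level_le_one : ∀ z, (T.path z ∩ {w | G.dist r w = t + 1}).ncard ≤ 1 := fun z =>
    (Set.ncard_le_one (Set.toFinite _)).2 fun v hv w hw =>
      injOn_dist_path hv.1 hw.1 (hv.2.trans hw.2.symm)
  rw [Set.union_inter_distrib_right]
  exact (Set.ncard_union_le _ _).trans (add_le_add (level_le_one x) (level_le_one y))

lemma branch_subset_side (h : DistinctNeighbors G r a b c) (hx : x ∈ T.branch a)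
    (hy : y ∈ T.branch b) : T.branch c ⊆ T.side x y c :=
  branch_subset_reachIn (branch_subset_compl h hx hy)

lemma branch_subset_spread (hS : Disjoint (T.branch c) S) : T.branch c ⊆ T.spread a c S :=
  branch_subset_reachIn (Set.subset_sdiff.2 ⟨Set.subset_union_right, hS⟩)

lemma spread_subset_side (h : DistinctNeighbors G r a b c) (hx : x ∈ T.branch a)
    (hy : y ∈ T.branch b) (hS : T.path x ⊆ S) : T.spread a c S ⊆ T.side x y c := by
  refine reachIn_mono fun v ⟨hv, hvS⟩ => ?_
  rw [Set.mem_compl_iff, Set.mem_union, not_or]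
  refine ⟨fun hvx => hvS (hS hvx), fun hvy => ?_⟩
  rcases hv with hv | hv
  · exact Set.disjoint_left.1 (disjoint_branch_path h.adj₁ h.adj₂ h.ne₁₂ hy) hv hvy
  · exact branch_subset_compl h hx hy hv (.inr hvy)

lemma notMem_side_and_adj_of_mem_spread (h : DistinctNeighbors G r a b c)
    (hxy : T.IsOutermost a b c x y) (hz : z ∈ T.spread a b (T.path x)) (hza : z ∈ T.branch a) :
    z ∉ T.side x y c ∧ G.Adj x y := by
  have closed : T.spread a b (T.path x) ⊆
      T.branch b ∪ {z | z ∉ T.side x y c ∧ G.Adj x y} := by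
    refine reachIn_subset_of_closed (.inl mem_branch_self) fun u hu huS w hwS huw => ?_
    refine hwS.1.symm.imp_right fun hwa => ?_
    rcases huS.1 with hua | hub
    · obtain ⟨hu, hxy'⟩ := hu.resolve_left
        (Set.disjoint_left.1 (disjoint_branch h.adj₁ h.adj₂ h.ne₁₂) hua)
      refine ⟨fun hw => hu (mem_reachIn_of_adj hw ?_ huw.symm), hxy'⟩
      exact not_or.2 ⟨huS.2, Set.disjoint_left.1
        (disjoint_branch_path h.adj₁ h.adj₂ h.ne₁₂ hxy.right_mem) hua⟩
    · have e : T.IsCrossEdge a b w u := ⟨hwa, hub, huw.symm⟩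
      exact ⟨hxy.left_notMem_side e, hxy.adj_of_isCrossEdge e⟩
  exact (closed hz).resolve_left (Set.disjoint_left.1 (disjoint_branch h.adj₁ h.adj₂ h.ne₁₂) hza)

lemma mem_spread_or_of_adj (hN : ∀ v, G.Adj r v → v = a ∨ v = b ∨ v = c)
    (h : DistinctNeighbors G r a b c) (hxy : T.IsOutermost a c b x y) (hx' : x' ∈ T.branch b)
    (hu : u ∈ T.spread a c (T.path x)) (hwx : w ∉ T.path x) (hwx' : w ∉ T.path x')
    (huw : G.Adj u w) : w ∈ T.spread a c (T.path x) ∨ w ∈ T.spread b c (T.path x') := by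
  have hwr : w ≠ r := fun hwr => hwx (hwr.symm ▸ root_mem_path)
  obtain ⟨d, hd, hwd⟩ := T.exists_adj_root_mem_branch hwr
  have h' : DistinctNeighbors G r a c b := h.rotate.swap
  obtain ⟨huS, hux⟩ := reachIn_subset hu
  rcases hN d hd with rfl | rfl | rfl
  · exact .inl (mem_reachIn_of_adj hu ⟨.inl hwd, hwx⟩ huw)
  · right
    rcases huS with hua | huc
    · refine absurd ?_ (notMem_side_and_adj_of_mem_spread h' hxy hu hua).1
      refine mem_reachIn_of_adj (branch_subset_side h' hxy.left_mem hxy.right_mem hwd) ?_ huw.symm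
      exact not_or.2 ⟨hux, Set.disjoint_left.1
        (disjoint_branch_path h.adj₁ h.adj₃ h.ne₁₃ hxy.right_mem) hua⟩
    · exact mem_reachIn_of_adj
        (branch_subset_spread (disjoint_branch_path h.adj₃ h.adj₂ h.ne₂₃.symm hx') huc)
        ⟨.inl hwd, hwx'⟩ huw
  · exact .inl (mem_reachIn_of_adj hu ⟨.inr hwd, hwx⟩ huw)

lemma burn_subset (hN : ∀ v, G.Adj r v → v = a ∨ v = b ∨ v = c)
    (h : DistinctNeighbors G r a b c) (hxy : T.IsOutermost a c b x y)
    (hxy' : T.IsOutermost b c a x' y') :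
    T.burn x x' ⊆ insert r (T.spread a c (T.path x) ∪ T.spread b c (T.path x')) := by
  have hN' : ∀ v, G.Adj r v → v = b ∨ v = a ∨ v = c := fun v hv => or_left_comm.1 (hN v hv)
  refine reachIn_subset_of_closed (.inl rfl) fun u hu _ w hw huw => ?_
  refine hw.imp_right fun hw => ?_
  rw [Set.mem_compl_iff, Set.mem_union, not_or] at hw
  rcases hu with rfl | hu | hu
  · rcases hN w huw with rfl | rfl | rfl
    · exact absurd hxy.left_mem hw.1
    · exact absurd hxy'.left_mem hw.2
    · exact .inl (branch_subset_spread (disjoint_branch_path h.adj₃ h.adj₁ h.ne₁₃.symm hxy.left_mem)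
        mem_branch_self)
  · exact mem_spread_or_of_adj hN h hxy hxy'.left_mem hu hw.1 hw.2 huw
  · exact (mem_spread_or_of_adj hN' h.swap hxy' hxy.left_mem hu hw.2 hw.1 huw).symm

lemma mem_spread_of_mem_burn (hN : ∀ v, G.Adj r v → v = a ∨ v = b ∨ v = c)
    (h : DistinctNeighbors G r a b c) (hxy : T.IsOutermost a c b x y)
    (hxy' : T.IsOutermost b c a x' y') (hza : z ∈ T.branch a) (hz : z ∈ T.burn x x') :
    z ∈ T.spread a c (T.path x) := by
  rcases burn_subset hN h hxy hxy' hz with rfl | hz | hz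
  · exact absurd hza (root_notMem_branch h.adj₁)
  · exact hz
  · rcases (reachIn_subset hz).1 with hzb | hzc
    · exact absurd hzb (Set.disjoint_left.1 (disjoint_branch h.adj₁ h.adj₂ h.ne₁₂) hza)
    · exact absurd hzc (Set.disjoint_left.1 (disjoint_branch h.adj₁ h.adj₃ h.ne₁₃) hza)

lemma touches_path_diff_spread (h : DistinctNeighbors G r a b c)
    (hpq : T.IsOutermost a b c p q) (hza : z ∈ T.branch a) (hzx : z ∈ T.spread a c (T.path x))
    (hzp : z ∈ T.spread a b (T.path p)) :
    Touches G (T.path p \ T.path x) (T.spread a c (T.path x ∪ T.path p)) := by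
  have not_subset : ¬ T.spread a c (T.path x) ⊆ (T.path p)ᶜ := fun subset => by
    have subset' : T.spread a c (T.path x) ⊆ T.spread a c (T.path x ∪ T.path p) :=
      reachIn_subset_reachIn fun v hv =>
        ⟨(reachIn_subset hv).1, not_or.2 ⟨(reachIn_subset hv).2, subset hv⟩⟩
    exact (notMem_side_and_adj_of_mem_spread h hpq hzp hza).1
      (spread_subset_side h hpq.left_mem hpq.right_mem Set.subset_union_right (subset' hzx))
  have hcp : c ∉ T.path p := Set.disjoint_left.1
    (disjoint_branch_path h.adj₃ h.adj₁ h.ne₁₃.symm hpq.left_mem) mem_branch_self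
  obtain ⟨d, hd, s, hs, hds⟩ := exists_adj_of_not_reachIn_subset hcp not_subset
  refine ⟨s, ⟨not_not.1 hs.2, hs.1.2⟩, d, ?_, hds.symm⟩
  rwa [spread, ← Set.sdiff_sdiff]

lemma disjoint_spread (h : DistinctNeighbors G r a b c) (hxy : T.IsOutermost a b c x y)
    (hS : T.path x ⊆ S) : Disjoint (T.spread a b S) (T.spread a c S) := by
  refine Set.disjoint_left.2 fun v hvb hvc => ?_
  have hva : v ∈ T.branch a := (reachIn_subset hvb).1.elim id fun hb =>
    (reachIn_subset hvc).1.elim id fun hc =>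
      absurd hc (Set.disjoint_left.1 (disjoint_branch h.adj₂ h.adj₃ h.ne₂₃) hb)
  have hvx := reachIn_mono (Set.sdiff_subset_sdiff_right hS) hvb
  exact (notMem_side_and_adj_of_mem_spread h hxy hvx hva).1
    (spread_subset_side h hxy.left_mem hxy.right_mem hS hvc)

lemma branch_subset_spread_path_union_path (ha : G.Adj r a) (hc : G.Adj r c) (hac : a ≠ c)
    (hx : x ∈ T.branch a) (hp : p ∈ T.branch a) :
    T.branch c ⊆ T.spread a c (T.path x ∪ T.path p) :=
  branch_subset_spread (Set.disjoint_union_right.2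
    ⟨disjoint_branch_path hc ha hac.symm hx, disjoint_branch_path hc ha hac.symm hp⟩)

lemma isMinor_K33_of_touches_path_diff {B C : Set V} (ha : G.Adj r a) (hb : G.Adj r b)
    (hc : G.Adj r c) (hx : x ∈ T.branch a) (hp : p ∈ T.branch a) (hpx : p ∉ T.path x)
    (hxp : x ∉ T.path p) (hbB : b ∈ B) (hcC : c ∈ C) (conn_B : (G.induce B).Connected)
    (conn_C : (G.induce C).Connected) (hB : B ⊆ (T.path x ∪ T.path p)ᶜ)
    (hC : C ⊆ (T.path x ∪ T.path p)ᶜ) (hBC : Disjoint B C)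
    (px_B : Touches G (T.path p \ T.path x) B) (px_C : Touches G (T.path p \ T.path x) C)
    (xp_B : Touches G (T.path x \ T.path p) B) (xp_C : Touches G (T.path x \ T.path p) C) :
    IsMinor (completeBipartiteGraph (Fin 3) (Fin 3)) G := by
  refine isMinor_K33_of_sets (A₁ := {r}) (A₂ := T.path p \ T.path x) (A₃ := T.path x \ T.path p)
    (B₁ := T.stem a p x) (B₂ := B) (B₃ := C) ?_ ?_ ?_
  · simp [connected_induce_path_diff, connected_induce_stem, *]
  · have root_notMem := T.root_notMem_branch ha
    have root_mem : ∀ z, r ∈ T.path z := fun _ => root_mem_path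
    clear * - root_notMem root_mem hB hC hBC
    simp only [List.pairwise_cons, List.forall_mem_cons, List.not_mem_nil, IsEmpty.forall_iff,
      implies_true, List.Pairwise.nil, and_true, Set.disjoint_left] at hBC ⊢
    refine ⟨⟨?_, ?_, ?_, ?_, ?_⟩, ⟨?_, ?_, ?_, ?_⟩, ⟨?_, ?_, ?_⟩, ⟨?_, ?_⟩, hBC⟩ <;> intro v
    all_goals
      specialize @hB v
      specialize @hC v
      simp only [stem, Set.mem_union, Set.mem_sdiff, Set.mem_inter_iff, Set.mem_compl_iff,
        Set.mem_singleton_iff] at *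
      grind
  · simp only [List.forall_mem_cons, List.not_mem_nil, IsEmpty.forall_iff, implies_true, and_true]
    exact ⟨⟨⟨r, rfl, a, ⟨mem_branch_self, hp, hx⟩, ha⟩, ⟨r, rfl, b, hbB, hb⟩, r, rfl, c, hcC, hc⟩,
      ⟨touches_path_diff_stem hp hx hpx, px_B, px_C⟩,
      stem_comm ▸ touches_path_diff_stem hx hp hxp, xp_B, xp_C⟩

lemma isMinor_K33_of_mem_spread (h : DistinctNeighbors G r a b c)
    (hxy : T.IsOutermost a c b x y) (hpq : T.IsOutermost a b c p q) (hza : z ∈ T.branch a)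
    (hzx : z ∈ T.spread a c (T.path x)) (hzp : z ∈ T.spread a b (T.path p)) :
    IsMinor (completeBipartiteGraph (Fin 3) (Fin 3)) G := by
  have h' : DistinctNeighbors G r a c b := h.rotate.swap
  have px_c := touches_path_diff_spread h hpq hza hzx hzp
  have xp_b := touches_path_diff_spread h' hxy hza hzp hzx
  rw [Set.union_comm] at xp_b
  have hpx : p ∉ T.path x := px_c.elim fun _ h => notMem_path_of_mem_diff h.1
  have hxp : x ∉ T.path p := xp_b.elim fun _ h => notMem_path_of_mem_diff h.1
  have hb : T.branch b ⊆ T.spread a b (T.path x ∪ T.path p) :=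
    branch_subset_spread_path_union_path h.adj₁ h.adj₂ h.ne₁₂ hxy.left_mem hpq.left_mem
  have hc : T.branch c ⊆ T.spread a c (T.path x ∪ T.path p) :=
    branch_subset_spread_path_union_path h.adj₁ h.adj₃ h.ne₁₃ hxy.left_mem hpq.left_mem
  exact isMinor_K33_of_touches_path_diff h.adj₁ h.adj₂ h.adj₃ hxy.left_mem hpq.left_mem hpx hxp
    (hb mem_branch_self) (hc mem_branch_self)
    (connected_induce_reachIn (reachIn_subset (hb mem_branch_self)))
    (connected_induce_reachIn (reachIn_subset (hc mem_branch_self)))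
    (fun _ hv => (reachIn_subset hv).2) (fun _ hv => (reachIn_subset hv).2)
    (disjoint_spread h hpq Set.subset_union_right)
    ⟨p, ⟨mem_path_self, hpx⟩, q, hb hpq.right_mem,
      (notMem_side_and_adj_of_mem_spread h hpq hzp hza).2⟩ px_c xp_b
    ⟨x, ⟨mem_path_self, hxp⟩, y, hc hxy.right_mem,
      (notMem_side_and_adj_of_mem_spread h' hxy hzx hza).2⟩

lemma notMem_burn_or_notMem_burn (hminor : ¬ IsMinor (completeBipartiteGraph (Fin 3) (Fin 3)) G)
    (hN : ∀ v, G.Adj r v → v = a ∨ v = b ∨ v = c) (h : DistinctNeighbors G r a b c)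
    (hxy : T.IsOutermost a c b x y) (hxy' : T.IsOutermost b c a x' y')
    (hpq : T.IsOutermost a b c p q) (hza : z ∈ T.branch a) :
    z ∉ T.burn x x' ∨ z ∉ T.burn p y' := by
  by_contra! hz
  have hN' : ∀ v, G.Adj r v → v = a ∨ v = c ∨ v = b := fun v hv => (hN v hv).imp_right Or.symm
  exact hminor (isMinor_K33_of_mem_spread h hxy hpq hza
    (mem_spread_of_mem_burn hN h hxy hxy' hza hz.1)
    (mem_spread_of_mem_burn hN' h.rotate.swap hpq hxy'.symm hza hz.2))

lemma insert_root_compl_burn_eq_univ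
    (hminor : ¬ IsMinor (completeBipartiteGraph (Fin 3) (Fin 3)) G)
    (hN : ∀ v, G.Adj r v → v = a ∨ v = b ∨ v = c) (h : DistinctNeighbors G r a b c)
    (hxy : T.IsOutermost a c b x y) (hxy' : T.IsOutermost b c a x' y')
    (hpq : T.IsOutermost a b c p q) :
    insert r ((T.burn x x')ᶜ ∪ (T.burn p y')ᶜ ∪ (T.burn q y)ᶜ) = Set.univ := by
  refine Set.eq_univ_of_forall fun z => or_iff_not_imp_left.2 fun hz => ?_
  have hNb : ∀ v, G.Adj r v → v = b ∨ v = a ∨ v = c := fun v hv => or_left_comm.1 (hN v hv)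
  have hNc : ∀ v, G.Adj r v → v = c ∨ v = a ∨ v = b := fun v hv => or_rotate.2 (hN v hv)
  have saved_a := notMem_burn_or_notMem_burn hminor hN h hxy hxy' hpq (z := z)
  have saved_b := notMem_burn_or_notMem_burn hminor hNb h.swap hxy' hxy hpq.symm (z := z)
  have saved_c := notMem_burn_or_notMem_burn hminor hNc h.rotate hxy'.symm hpq hxy.symm (z := z)
  rw [burn_comm (x := x')] at saved_b
  rw [burn_comm (x := y'), burn_comm (x := y)] at saved_c
  simp only [Set.mem_union, Set.mem_compl_iff]
  obtain ⟨d, hd, hzd⟩ := T.exists_adj_root_mem_branch hz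
  rcases hN d hd with rfl | rfl | rfl
  · exact .inl (saved_a hzd)
  · exact (saved_b hzd).imp_left .inl
  · exact (saved_c hzd).imp_left .inr

end BFSTree

lemma exists_distinctNeighbors {V : Type*} {G : SimpleGraph V} {r : V}
    [Fintype (G.neighborSet r)] (hr : G.degree r = 3) :
    ∃ a b c, DistinctNeighbors G r a b c ∧ ∀ v, G.Adj r v → v = a ∨ v = b ∨ v = c := by
  classical
  obtain ⟨a, b, c, hab, hac, hbc, h⟩ := Finset.card_eq_three.1 hr
  have adj_iff : ∀ v, G.Adj r v ↔ v = a ∨ v = b ∨ v = c := fun v => by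
    rw [← SimpleGraph.mem_neighborFinset, h]
    simp
  exact ⟨a, b, c, ⟨by simp [adj_iff], by simp [adj_iff], by simp [adj_iff], hab, hac, hbc⟩,
    fun v => (adj_iff v).1⟩

theorem sn_two_of_degree_eq_three_general {V : Type*} [Fintype V] {G : SimpleGraph V} {r : V}
    [Fintype (G.neighborSet r)] (hconn : G.Connected)
    (hminor : ¬ IsMinor (completeBipartiteGraph (Fin 3) (Fin 3)) G) (hr : G.degree r = 3) :
    Fintype.card V ≤ 3 * sn G (fun _ => 2) r + 1 := by
  obtain ⟨a, b, c, h, hN⟩ := exists_distinctNeighbors hr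
  obtain ⟨T⟩ := BFSTree.nonempty_of_connected (r := r) hconn
  obtain ⟨x, y, hxy⟩ := T.exists_isOutermost hminor h.rotate.swap
  obtain ⟨x', y', hxy'⟩ := T.exists_isOutermost hminor h.rotate.rotate
  obtain ⟨p, q, hpq⟩ := T.exists_isOutermost hminor h
  calc
    Fintype.card V = (Set.univ : Set V).ncard := by simp
    _ = (insert r ((T.burn x x')ᶜ ∪ (T.burn p y')ᶜ ∪ (T.burn q y)ᶜ)).ncard := by
      rw [T.insert_root_compl_burn_eq_univ hminor hN h hxy hxy' hpq]
    _ ≤ ((T.burn x x')ᶜ ∪ (T.burn p y')ᶜ ∪ (T.burn q y)ᶜ).ncard + 1 := Set.ncard_insert_le _ _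
    _ ≤ (T.burn x x')ᶜ.ncard + (T.burn p y')ᶜ.ncard + (T.burn q y)ᶜ.ncard + 1 := by
      gcongr
      exact (Set.ncard_union_le _ _).trans (by gcongr; exact Set.ncard_union_le _ _)
    _ ≤ 3 * sn G (fun _ => 2) r + 1 := by
      linarith [T.ncard_compl_burn_le_sn (x := x) (y := x'),
        T.ncard_compl_burn_le_sn (x := p) (y := y'), T.ncard_compl_burn_le_sn (x := q) (y := y)]

/-- Observation 3.1 (second case): if the fire starts at a vertex of degree 3 in a
connected planar graph on `n ≥ 5` vertices, two firefighters can save more than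
`n/3 - 1` vertices. -/
theorem sn_two_of_degree_eq_three {V : Type} [Fintype V] (G : SimpleGraph V)
    [DecidableRel G.Adj] (hconn : G.Connected) (hplanar : IsPlanar G)
    (hn : 5 ≤ Fintype.card V) (r : V) (hr : G.degree r = 3) :
    ((sn G (fun _ => 2) r : ℝ)) > (Fintype.card V : ℝ) / 3 - 1 := by
  have card_le : (Fintype.card V : ℝ) ≤ 3 * sn G (fun _ => 2) r + 1 := by
    exact_mod_cast sn_two_of_degree_eq_three_general hconn hplanar.not_isMinor_K33 hr
  linarith
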